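/- arXiv:1403.2954 — 4 statements merged into one kernel-verified Lean document; each statement's English description precedes it below -/
import Mathlib

section
/- For every β ∈ (0, 1/2) there exist constants C' > 0 and t₀ ∈ (0, 1] such that for all t ∈ (0, t₀], ∫_ℝ f^{t^β}(x) dν_t(x) ≤ C' · t^{1 + β(2 − α)}. (Small-time bound for the thresholded moments of a pure-jump Lévy distribution; this is Proposition 4.1 of the paper.) -/
open MeasureTheory

namespace SmallTime

lemma tail_finite (μ : Measure ℝ) (hm : Integrable (fun x : ℝ => x ^ 2) μ) (v : ℝ) (hv : 0 < v) :
    μ {x : ℝ | v < |x|} < ⊤ := by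
  have h := hm.measure_norm_ge_lt_top (ε := v ^ 2) (by positivity)
  refine lt_of_le_of_lt (measure_mono ?_) h
  intro x hx
  simp only [Set.mem_setOf_eq] at hx ⊢
  rw [Real.norm_eq_abs, abs_pow]
  gcongr

lemma meas_tail (v : ℝ) : MeasurableSet {x : ℝ | v < |x|} :=
  measurableSet_lt measurable_const (by fun_prop)

lemma ann_le (μ : Measure ℝ) (hm : Integrable (fun x : ℝ => x ^ 2) μ) (v w : ℝ) (hv : 0 < v) (hw : 0 < w)
    (hs : ∀ᵐ x ∂μ, |x| ≤ 1) (K : ℝ)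
    (hK : μ.real {x : ℝ | w < |x|} ≤ K ∨ 1 ≤ w ∧ 0 ≤ K)  :
    μ.real {x : ℝ | v < |x|} ≤ K + (∫ x in Set.Icc (-w) w, x ^ 2 ∂μ) / v ^ 2 := by
  have hf := tail_finite μ hm v hv
  have h1 : μ.real {x : ℝ | v < |x|} ≤
      μ.real {x : ℝ | max v w < |x|} + μ.real ({x : ℝ | v < |x|} ∩ Set.Icc (-w) w) := by
    refine le_trans (measureReal_mono (s₂ := {x : ℝ | max v w < |x|} ∪ ({x : ℝ | v < |x|} ∩ Set.Icc (-w) w)) ?_ ?_) (measureReal_union_le _ _)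
    · intro x hx
      simp only [Set.mem_setOf_eq, Set.mem_union, Set.mem_inter_iff, Set.mem_Icc] at hx ⊢
      rcases lt_or_ge w |x| with h | h
      · left; exact max_lt hx h
      · right; exact ⟨hx, abs_le.1 h⟩
    · refine (lt_of_le_of_lt (measure_mono ?_) hf).ne
      intro x hx
      rcases hx with hx | hx
      · exact lt_of_le_of_lt (le_max_left v w) (show max v w < |x| from hx)
      · exact hx.1
  have h2 : μ.real {x : ℝ | max v w < |x|} ≤ K := by
    rcases hK with h | ⟨h, h'⟩
    · rcases le_total v w with hvw | hvw
      · rwa [max_eq_right hvw]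
      · rw [max_eq_left hvw]
        exact (measureReal_mono (fun x hx => lt_of_le_of_lt hvw hx) (tail_finite μ hm w hw).ne).trans h
    · have : μ {x : ℝ | max v w < |x|} = 0 := by
        refine measure_mono_null ?_ hs
        intro x hx
        have : w < |x| := lt_of_le_of_lt (le_max_right v w) (show max v w < |x| from hx)
        simp only [Set.mem_compl_iff, Set.mem_setOf_eq, not_le]
        linarith
      rw [measureReal_def, this]; simpa using h'
  have h3 : μ.real ({x : ℝ | v < |x|} ∩ Set.Icc (-w) w) * v ^ 2 ≤
      ∫ x in Set.Icc (-w) w, x ^ 2 ∂μ := by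
    have hA : MeasurableSet ({x : ℝ | v < |x|} ∩ Set.Icc (-w) w) :=
      (meas_tail v).inter measurableSet_Icc
    calc μ.real ({x : ℝ | v < |x|} ∩ Set.Icc (-w) w) * v ^ 2
        = ∫ x in ({x : ℝ | v < |x|} ∩ Set.Icc (-w) w), v ^ 2 ∂μ := by simp
      _ ≤ ∫ x in ({x : ℝ | v < |x|} ∩ Set.Icc (-w) w), x ^ 2 ∂μ := by
          refine setIntegral_mono_on ?_ hm.integrableOn hA ?_
          · refine integrableOn_const (lt_of_le_of_lt (measure_mono Set.inter_subset_left) hf).ne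
          · intro x hx
            have : v < |x| := hx.1
            rw [← sq_abs x]; gcongr
      _ ≤ _ := setIntegral_mono_set hm.integrableOn
          (Filter.Eventually.of_forall fun x => sq_nonneg x)
          (HasSubset.Subset.eventuallyLE Set.inter_subset_right)
  have h4 := (le_div_iff₀ (show 0 < v ^ 2 by positivity)).2 h3
  linarith

lemma tail_bound (μ : Measure ℝ) (hm : Integrable (fun x : ℝ => x ^ 2) μ)
    (hs : ∀ᵐ x ∂μ, |x| ≤ 1) (α C : ℝ) (hα : 0 < α) (hC : 0 < C)
    (hμ_small : ∀ v ∈ Set.Ioc (0 : ℝ) 1,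
      ∫ x in Set.Icc (-v) v, x ^ 2 ∂μ ≤ C * v ^ (2 - α)) :
    ∃ K : ℝ, 0 < K ∧ ∀ v ∈ Set.Ioc (0 : ℝ) 1, μ.real {x : ℝ | v < |x|} ≤ K * v ^ (-α) := by
  set q : ℝ := (2 : ℝ) ^ (-α) with hq
  have hq0 : 0 < q := by positivity
  have hq1 : q < 1 := Real.rpow_lt_one_of_one_lt_of_neg (by norm_num) (by linarith)
  have hd : 0 < 1 - q := by linarith
  have hKC : 4 * C ≤ 4 * C / (1 - q) := by
    rw [le_div_iff₀ hd]; nlinarith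
  refine ⟨4 * C / (1 - q), by positivity, ?_⟩
  have key : ∀ n : ℕ, ∀ v ∈ Set.Ioc (0 : ℝ) 1, 1 ≤ 2 ^ n * v →
      μ.real {x : ℝ | v < |x|} ≤ 4 * C / (1 - q) * v ^ (-α) := by
    have large : ∀ v ∈ Set.Ioc (0 : ℝ) 1, 1 ≤ 2 * v →
        μ.real {x : ℝ | v < |x|} ≤ 4 * C / (1 - q) * v ^ (-α) := by
      intro v hv h2
      have h := ann_le μ hm v 1 hv.1 one_pos hs 0 (Or.inr ⟨le_rfl, le_rfl⟩)
      have h1 := hμ_small 1 ⟨one_pos, le_rfl⟩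
      rw [Real.one_rpow] at h1
      have h3 : (1 : ℝ) ≤ v ^ (-α) :=
        Real.one_le_rpow_of_pos_of_le_one_of_nonpos hv.1 hv.2 (by linarith)
      have h4 : (∫ x in Set.Icc (-1 : ℝ) 1, x ^ 2 ∂μ) / v ^ 2 ≤ 4 * C := by
        rw [div_le_iff₀ (by have := hv.1; positivity)]
        have hv2 : 1 ≤ 4 * v ^ 2 := by nlinarith
        have : C * 1 ≤ C * (4 * v ^ 2) := by gcongr
        linarith
      have : 4 * C / (1 - q) * 1 ≤ 4 * C / (1 - q) * v ^ (-α) := by gcongr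
      linarith
    intro n
    induction n with
    | zero => intro v hv h; exact large v hv (by have := hv.1; simp at h; linarith)
    | succ n ih =>
      intro v hv h
      rcases le_total 1 (2 * v) with h2 | h2
      · exact large v hv h2
      · have hv0 := hv.1
        have h2v : 2 * v ∈ Set.Ioc (0 : ℝ) 1 := ⟨by linarith, h2⟩
        have h3 := ih (2 * v) h2v (by rw [pow_succ] at h; linarith)
        have h4 := ann_le μ hm v (2 * v) hv.1 h2v.1 hs _ (Or.inl h3)
        have h5 := hμ_small (2 * v) h2v
        have e1 : (2 * v) ^ (-α) = q * v ^ (-α) := Real.mul_rpow (by norm_num) hv0.le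
        have e2 : (2 * v) ^ (2 - α) = 4 * q * v ^ (-α) * v ^ 2 := by
          rw [show (2 - α) = (2 : ℕ) + (-α) by push_cast; ring, Real.rpow_add h2v.1, e1,
            Real.rpow_natCast]
          ring
        rw [e1] at h4
        rw [e2] at h5
        have h6 : (∫ x in Set.Icc (-(2 * v)) (2 * v), x ^ 2 ∂μ) / v ^ 2 ≤ C * (4 * q * v ^ (-α)) := by
          rw [div_le_iff₀ (by positivity)]; linarith
        have hp : 0 < v ^ (-α) := Real.rpow_pos_of_pos hv0 _
        have e3 : 4 * C / (1 - q) * q + 4 * C = 4 * C / (1 - q) := by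
          field_simp; ring
        have : C * (4 * q * v ^ (-α)) ≤ 4 * C * v ^ (-α) := by
          have : q * (C * v ^ (-α)) ≤ 1 * (C * v ^ (-α)) := by gcongr
          linarith
        have e4 : 4 * C / (1 - q) * v ^ (-α) = 4 * C / (1 - q) * (q * v ^ (-α)) + 4 * C * v ^ (-α) := by
          rw [← e3]; field_simp; ring
        linarith
  intro v hv
  obtain ⟨n, hn⟩ := pow_unbounded_of_one_lt (1 / v) (one_lt_two)
  refine key n v hv ?_
  rw [div_lt_iff₀ hv.1] at hn
  exact hn.le

lemma f_le (f : ℝ → ℝ) (hf_supp : Function.support f ⊆ Set.Icc (-2 : ℝ) 2)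
    (hf_sq : ∀ x : ℝ, |x| ≤ 1 → f x = x ^ 2)
    (hf_bdd : ∀ x : ℝ, 0 ≤ f x ∧ f x ≤ 2) (x : ℝ) :
    f x ≤ Real.pi ^ 2 * (1 - Real.cos x) := by
  by_cases hx : |x| ≤ 2
  · have h1 : f x ≤ 2 * x ^ 2 := by
      rcases le_total |x| 1 with h | h
      · rw [hf_sq x h]; nlinarith [sq_nonneg x]
      · have := (hf_bdd x).2
        rw [← sq_abs x]; nlinarith
    have h3 := Real.cos_le_one_sub_mul_cos_sq (x := x) (by linarith [Real.pi_gt_three])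
    have h4 : Real.pi ^ 2 * (2 / Real.pi ^ 2 * x ^ 2) = 2 * x ^ 2 := by
      have := Real.pi_pos; field_simp
    have h5 : Real.pi ^ 2 * (2 / Real.pi ^ 2 * x ^ 2) ≤ Real.pi ^ 2 * (1 - Real.cos x) := by
      gcongr; linarith
    linarith
  · have : f x = 0 := by
      by_contra h
      exact hx (abs_le.2 (hf_supp h))
    rw [this]
    have := Real.cos_le_one x
    have : 0 ≤ 1 - Real.cos x := by linarith
    positivity

lemma exp_aux (a b : ℝ) (ha : a ≤ 0) : 1 - Real.exp a * Real.cos b ≤ -a + b ^ 2 := by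
  have h1 := Real.add_one_le_exp a
  have h2 := Real.one_sub_sq_div_two_le_cos (x := b)
  have h3 : Real.exp a ≤ 1 := Real.exp_le_one_iff.2 ha
  have h4 := Real.exp_pos a
  have h5 : Real.exp a * (1 - b ^ 2 / 2) ≤ Real.exp a * Real.cos b := by gcongr
  nlinarith [sq_nonneg b]

/-- The integrand. -/
noncomputable def h (u x : ℝ) : ℂ := Complex.exp (Complex.I * (u : ℂ) * (x : ℂ)) - 1
            - Complex.I * (u : ℂ) * (x : ℂ)

lemma h_re (u x : ℝ) : (h u x).re = Real.cos (u * x) - 1 := by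
  have : Complex.I * (u : ℂ) * (x : ℂ) = ((u * x : ℝ) : ℂ) * Complex.I := by push_cast; ring
  rw [h, this]
  simp only [Complex.sub_re, Complex.exp_ofReal_mul_I_re, Complex.one_re, Complex.re_ofReal_mul,
    Complex.I_re]
  ring

lemma h_norm (v x : ℝ) (hv : 0 < v) :
    ‖h (1 / v) x‖ ≤ (Set.Icc (-v) v).indicator (fun x => x ^ 2) x / v ^ 2
      + {x : ℝ | v < |x|}.indicator (fun x => |x|) x * (3 / v) := by
  have e : Complex.I * ((1 / v : ℝ) : ℂ) * (x : ℂ) = ((x / v : ℝ) : ℂ) * Complex.I := by push_cast; ring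
  have en : ‖((x / v : ℝ) : ℂ) * Complex.I‖ = |x| / v := by
    rw [norm_mul, Complex.norm_I, Complex.norm_real, Real.norm_eq_abs, abs_div, abs_of_pos hv, mul_one]
  rw [h, e]
  by_cases hx : |x| ≤ v
  · rw [Set.indicator_of_mem (by exact abs_le.1 hx), Set.indicator_of_notMem (by simpa using hx)]
    refine (Complex.norm_exp_sub_one_sub_id_le ?_).trans ?_
    · rw [en]; exact (div_le_one hv).2 hx
    · rw [en, div_pow, sq_abs]; simp
  · rw [Set.indicator_of_notMem (by exact fun h => hx (abs_le.2 h)), Set.indicator_of_mem (by simpa using hx)]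
    refine (norm_sub_le _ _).trans ?_
    have := norm_sub_le (Complex.exp (((x / v : ℝ) : ℂ) * Complex.I)) 1
    rw [Complex.norm_exp_ofReal_mul_I, norm_one] at this
    rw [en]
    have h1 : 1 ≤ |x| / v := (one_le_div hv).2 (not_le.1 hx).le
    have : |x| * (3 / v) = 3 * (|x| / v) := by ring
    simp only [zero_div]
    linarith

lemma h_re_abs (v x : ℝ) (hv : 0 < v) :
    -(h (1 / v) x).re ≤ (Set.Icc (-v) v).indicator (fun x => x ^ 2) x / v ^ 2
      + {x : ℝ | v < |x|}.indicator (fun _ => (1 : ℝ)) x * 2 := by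
  rw [h_re]
  by_cases hx : |x| ≤ v
  · rw [Set.indicator_of_mem (by exact abs_le.1 hx), Set.indicator_of_notMem (by simpa using hx)]
    have := Real.one_sub_sq_div_two_le_cos (x := 1 / v * x)
    have e : x ^ 2 / v ^ 2 = (1 / v * x) ^ 2 := by ring
    rw [e]; nlinarith [sq_nonneg (1 / v * x)]
  · rw [Set.indicator_of_notMem (by exact fun h => hx (abs_le.2 h)), Set.indicator_of_mem (by simpa using hx)]
    have := Real.neg_one_le_cos (1 / v * x)
    simp only [zero_div]; linarith

end SmallTime



/-- Small-time bound for the thresholded moments of a pure-jump Lévy distribution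
(Proposition 4.1): for every `β ∈ (0, 1/2)` there are `C' > 0` and `t₀ ∈ (0,1]` such
that `∫ f^{t^β} dν_t ≤ C' · t^{1 + β(2-α)}` for all `t ∈ (0, t₀]`. -/
theorem small_time_thresholded_moment_bound
    (f : ℝ → ℝ) (hf_smooth : ContDiff ℝ (⊤ : ℕ∞) f)
    (hf_supp : Function.support f ⊆ Set.Icc (-2 : ℝ) 2)
    (hf_sq : ∀ x : ℝ, |x| ≤ 1 → f x = x ^ 2)
    (hf_bdd : ∀ x : ℝ, 0 ≤ f x ∧ f x ≤ 2)
    (μ : Measure ℝ)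
    (hμ_supp : μ (Set.Icc (-1 : ℝ) 1)ᶜ = 0)
    (hμ_mom : Integrable (fun x : ℝ => x ^ 2) μ)
    (α C : ℝ) (hα : α ∈ Set.Ioo (0 : ℝ) 2) (hC : 0 < C)
    (hμ_small : ∀ v ∈ Set.Ioc (0 : ℝ) 1,
      ∫ x in Set.Icc (-v) v, x ^ 2 ∂μ ≤ C * v ^ (2 - α))
    (ν : ℝ → Measure ℝ)
    (hν_prob : ∀ t : ℝ, 0 < t → IsProbabilityMeasure (ν t))
    (hν_char : ∀ t : ℝ, 0 < t → ∀ u : ℝ,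
      ∫ x : ℝ, Complex.exp (Complex.I * (u : ℂ) * (x : ℂ)) ∂(ν t) =
        Complex.exp ((t : ℂ) *
          ∫ x : ℝ, (Complex.exp (Complex.I * (u : ℂ) * (x : ℂ)) - 1
            - Complex.I * (u : ℂ) * (x : ℂ)) ∂μ))
    (β : ℝ) (hβ : β ∈ Set.Ioo (0 : ℝ) (1 / 2)) :
    ∃ C' > (0 : ℝ), ∃ t₀ ∈ Set.Ioc (0 : ℝ) 1, ∀ t ∈ Set.Ioc (0 : ℝ) t₀,
      ∫ x : ℝ, (t ^ β) ^ 2 * f (x / t ^ β) ∂(ν t) ≤ C' * t ^ (1 + β * (2 - α)) := by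
  obtain ⟨hα0, hα2⟩ := hα
  obtain ⟨hβ0, hβ2⟩ := hβ
  have hs : ∀ᵐ x ∂μ, |x| ≤ 1 := by
    refine measure_mono_null ?_ hμ_supp
    intro x hx
    exact fun h => hx (abs_le.2 h)
  obtain ⟨K, hK, htail⟩ := SmallTime.tail_bound μ hμ_mom hs α C hα0 hC hμ_small
  set M : ℝ := ∫ x, x ^ 2 ∂μ with hM
  have hM0 : 0 ≤ M := integral_nonneg fun x => sq_nonneg x
  refine ⟨Real.pi ^ 2 * ((C + 2 * K) + (C + 3 * (M + K)) ^ 2), by positivity, 1, ⟨one_pos, le_rfl⟩, ?_⟩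
  rintro t ⟨ht0, ht1⟩
  set v : ℝ := t ^ β with hv
  have hv0 : 0 < v := Real.rpow_pos_of_pos ht0 _
  have hv1 : v ≤ 1 := Real.rpow_le_one ht0.le ht1 hβ0.le
  have htv : t ≤ v ^ 2 := by
    rw [hv, ← Real.rpow_natCast, ← Real.rpow_mul ht0.le]
    conv_lhs => rw [← Real.rpow_one t]
    exact Real.rpow_le_rpow_of_exponent_ge ht0 ht1 (by push_cast; linarith)
  have hend : t ^ (1 + β * (2 - α)) = v ^ 2 * (t * v ^ (-α)) := by
    rw [Real.rpow_add ht0, Real.rpow_one, Real.rpow_mul ht0.le, ← hv,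
      show (2 - α) = (2 : ℕ) + (-α) by push_cast; ring, Real.rpow_add hv0, Real.rpow_natCast]
    ring
  have hprob := hν_prob t ht0
  have hT := htail v ⟨hv0, hv1⟩
  have hJ := hμ_small v ⟨hv0, hv1⟩
  have hvα : 0 < v ^ (-α) := Real.rpow_pos_of_pos hv0 _
  have hJ' : (∫ x in Set.Icc (-v) v, x ^ 2 ∂μ) / v ^ 2 ≤ C * v ^ (-α) := by
    rw [div_le_iff₀ (by positivity)]
    refine hJ.trans (le_of_eq ?_)
    rw [show (2 - α) = (2 : ℕ) + (-α) by push_cast; ring, Real.rpow_add hv0, Real.rpow_natCast]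
    ring
  have hTf := SmallTime.tail_finite μ hμ_mom v hv0
  -- integrability
  have hJi : Integrable ((Set.Icc (-v) v).indicator (fun x : ℝ => x ^ 2)) μ :=
    hμ_mom.indicator measurableSet_Icc
  have hTi : Integrable ({x : ℝ | v < |x|}.indicator (fun _ => (1 : ℝ))) μ :=
    (integrable_indicator_iff (SmallTime.meas_tail v)).2 (integrableOn_const hTf.ne)
  have hTint : ∫ x, {x : ℝ | v < |x|}.indicator (fun _ => (1 : ℝ)) x ∂μ = μ.real {x : ℝ | v < |x|} := by
    rw [integral_indicator (SmallTime.meas_tail v)]; simp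
  have hJint : ∫ x, (Set.Icc (-v) v).indicator (fun x : ℝ => x ^ 2) x ∂μ = ∫ x in Set.Icc (-v) v, x ^ 2 ∂μ :=
    integral_indicator measurableSet_Icc
  set lam : ℝ := v ^ (-(α / 2)) with hlam
  have hl0 : 0 < lam := Real.rpow_pos_of_pos hv0 _
  have hl2 : lam ^ 2 = v ^ (-α) := by
    rw [hlam, ← Real.rpow_natCast, ← Real.rpow_mul hv0.le]; congr 1; push_cast; ring
  have hlv : lam ^ 2 * v ≤ lam := by
    have : lam ≤ v⁻¹ := by
      rw [hlam, ← Real.rpow_neg_one]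
      exact Real.rpow_le_rpow_of_exponent_ge hv0 hv1 (by linarith)
    have : lam * v ≤ 1 := by
      have := mul_le_mul_of_nonneg_right this hv0.le
      rwa [inv_mul_cancel₀ hv0.ne'] at this
    nlinarith
  set G : ℝ → ℝ := fun x => (Set.Icc (-v) v).indicator (fun x => x ^ 2) x / v ^ 2
      + (lam * x ^ 2 + {x : ℝ | v < |x|}.indicator (fun _ => (1 : ℝ)) x / lam) * (3 / v) with hG
  have hGi : Integrable G μ :=
    (hJi.div_const _).add (((hμ_mom.const_mul lam).add (hTi.div_const _)).mul_const _)
  have hnG : ∀ x, ‖SmallTime.h (1 / v) x‖ ≤ G x := by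
    intro x
    refine (SmallTime.h_norm v x hv0).trans ?_
    simp only [hG]
    gcongr
    by_cases hx : v < |x|
    · rw [Set.indicator_of_mem (by exact hx), Set.indicator_of_mem (by exact hx), ← sq_abs x]
      have : 0 ≤ (lam * |x| - 1) ^ 2 / lam := by positivity
      have e : (lam * |x| - 1) ^ 2 / lam = lam * |x| ^ 2 - 2 * |x| + 1 / lam := by
        field_simp; ring
      have := abs_nonneg x
      linarith
    · rw [Set.indicator_of_notMem (by exact hx), Set.indicator_of_notMem (by exact hx)]
      simp only [zero_div, add_zero]; positivity
  have hhi : Integrable (SmallTime.h (1 / v)) μ := by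
    refine hGi.mono' ?_ (Filter.Eventually.of_forall hnG)
    apply Continuous.aestronglyMeasurable
    unfold SmallTime.h
    fun_prop
  set I : ℂ := ∫ x, SmallTime.h (1 / v) x ∂μ with hI
  have hIre : I.re = ∫ x, (SmallTime.h (1 / v) x).re ∂μ := (integral_re hhi).symm
  have hre0 : I.re ≤ 0 := by
    rw [hIre]
    refine integral_nonpos fun x => ?_
    rw [SmallTime.h_re]
    simpa using Real.cos_le_one _
  have hre : -I.re ≤ (C + 2 * K) * v ^ (-α) := by
    rw [hIre, ← integral_neg]
    refine (integral_mono hhi.re.neg ((hJi.div_const (v ^ 2)).add (hTi.mul_const 2))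
      (fun x => SmallTime.h_re_abs v x hv0)).trans ?_
    have := integral_add (hJi.div_const (v ^ 2)) (hTi.mul_const 2)
    simp only [Pi.add_apply]
    rw [this, integral_div, integral_mul_const, hTint, hJint]
    linarith
  have him : |I.im| ≤ (C + 3 * (M + K)) * (lam / v) := by
    refine (Complex.abs_im_le_norm I).trans ?_
    refine (norm_integral_le_of_norm_le hGi (Filter.Eventually.of_forall hnG)).trans ?_
    have e : ∫ x, G x ∂μ = (∫ x in Set.Icc (-v) v, x ^ 2 ∂μ) / v ^ 2
        + (lam * M + μ.real {x : ℝ | v < |x|} / lam) * (3 / v) := by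
      simp only [hG]
      have hi2 : Integrable (fun x : ℝ => (lam * x ^ 2
          + {x : ℝ | v < |x|}.indicator (fun _ => (1 : ℝ)) x / lam) * (3 / v)) μ :=
        ((hμ_mom.const_mul lam).add (hTi.div_const _)).mul_const _
      rw [integral_add (hJi.div_const _) hi2,
        integral_mul_const, integral_add (hμ_mom.const_mul lam) (hTi.div_const _),
        integral_div, integral_div, integral_const_mul, hTint, hJint]
    rw [e]
    have h1 : μ.real {x : ℝ | v < |x|} / lam ≤ K * lam := by
      rw [div_le_iff₀ hl0]; rw [← hl2] at hT; linarith
    have h2 : C * v ^ (-α) ≤ C * (lam / v) := by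
      gcongr
      rw [← hl2, le_div_iff₀ hv0]; exact hlv
    have h3 : (lam * M + μ.real {x : ℝ | v < |x|} / lam) * (3 / v) ≤ (lam * M + K * lam) * (3 / v) := by
      gcongr
    have h4 : (lam * M + K * lam) * (3 / v) = 3 * (M + K) * (lam / v) := by ring
    linarith
  have hchar := hν_char t ht0 (1 / v)
  have hRe : ∫ x, Real.cos (x / v) ∂(ν t) = Real.exp (t * I.re) * Real.cos (t * I.im) := by
    have h1 : Integrable (fun x : ℝ => Complex.exp (Complex.I * ((1 / v : ℝ) : ℂ) * (x : ℂ))) (ν t) := by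
      refine (integrable_const (1 : ℝ)).mono' ?_ (Filter.Eventually.of_forall fun x => ?_)
      · apply Continuous.aestronglyMeasurable; fun_prop
      · rw [show Complex.I * ((1 / v : ℝ) : ℂ) * (x : ℂ) = ((x / v : ℝ) : ℂ) * Complex.I by push_cast; ring,
          Complex.norm_exp_ofReal_mul_I]
    have h2 := congrArg Complex.re hchar
    have h3 := integral_re h1
    have h4 : ∀ x : ℝ, (Complex.exp (Complex.I * ((1 / v : ℝ) : ℂ) * (x : ℂ))).re = Real.cos (x / v) := by
      intro x
      rw [show Complex.I * ((1 / v : ℝ) : ℂ) * (x : ℂ) = ((x / v : ℝ) : ℂ) * Complex.I by push_cast; ring,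
          Complex.exp_ofReal_mul_I_re]
    have h5 : (Complex.exp ((t : ℂ) * I)).re = Real.exp (t * I.re) * Real.cos (t * I.im) := by
      rw [Complex.exp_re, Complex.re_ofReal_mul, Complex.im_ofReal_mul]
    rw [← h5]
    refine Eq.trans ?_ (Eq.trans h3 h2)
    exact integral_congr_ae (Filter.Eventually.of_forall fun x => (h4 x).symm)
  have hcosi : Integrable (fun x => Real.cos (x / v)) (ν t) := by
    refine (integrable_const (1 : ℝ)).mono' ?_ (Filter.Eventually.of_forall fun x => ?_)
    · apply Continuous.aestronglyMeasurable; fun_prop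
    · exact Real.abs_cos_le_one _
  have hmain : ∫ x : ℝ, v ^ 2 * f (x / v) ∂(ν t) ≤
      v ^ 2 * (Real.pi ^ 2 * (1 - Real.exp (t * I.re) * Real.cos (t * I.im))) := by
    have hone : ∫ x, (1 - Real.cos (x / v)) ∂(ν t) = 1 - Real.exp (t * I.re) * Real.cos (t * I.im) := by
      rw [integral_sub (integrable_const _) hcosi, hRe]; simp
    rw [← hone, ← integral_const_mul, ← integral_const_mul]
    refine integral_mono_of_nonneg (Filter.Eventually.of_forall fun x => ?_)
      ((((integrable_const _).sub hcosi).const_mul _).const_mul _)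
      (Filter.Eventually.of_forall fun x => ?_)
    · exact mul_nonneg (sq_nonneg _) (hf_bdd _).1
    · exact mul_le_mul_of_nonneg_left (SmallTime.f_le f hf_supp hf_sq hf_bdd _) (sq_nonneg _)
  have hA := SmallTime.exp_aux (t * I.re) (t * I.im) (by nlinarith)
  have hB : -(t * I.re) ≤ (C + 2 * K) * (t * v ^ (-α)) := by
    have := mul_le_mul_of_nonneg_left hre ht0.le
    linarith
  have hD : (t * I.im) ^ 2 ≤ (C + 3 * (M + K)) ^ 2 * (t * v ^ (-α)) := by
    have h1 : I.im ^ 2 ≤ ((C + 3 * (M + K)) * (lam / v)) ^ 2 := by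
      rw [← sq_abs]; gcongr
    have h2 : t / v ^ 2 ≤ 1 := (div_le_one (by positivity)).2 htv
    calc (t * I.im) ^ 2 = t ^ 2 * I.im ^ 2 := by ring
      _ ≤ t ^ 2 * ((C + 3 * (M + K)) * (lam / v)) ^ 2 := by gcongr
      _ = (C + 3 * (M + K)) ^ 2 * (t * lam ^ 2) * (t / v ^ 2) := by ring
      _ ≤ (C + 3 * (M + K)) ^ 2 * (t * lam ^ 2) * 1 := by gcongr
      _ = _ := by rw [hl2, mul_one]
  refine hmain.trans ?_
  rw [hend]
  calc v ^ 2 * (Real.pi ^ 2 * (1 - Real.exp (t * I.re) * Real.cos (t * I.im)))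
      ≤ v ^ 2 * (Real.pi ^ 2 * ((C + 2 * K) * (t * v ^ (-α)) + (C + 3 * (M + K)) ^ 2 * (t * v ^ (-α)))) := by
        gcongr; linarith
    _ = _ := by ring
end

section
/- For every β ∈ (0, 1/2) there exist constants C' > 0 and t₀ ∈ (0, 1] such that for all t ∈ (0, t₀], the truncated second moment satisfies ∫_{[−t^β, t^β]} x² dν_t(x) ≤ C' · t^{1 + β(2 − α)}. -/
open MeasureTheory

lemma aux_recursion (F : ℝ → ℝ) (γ D : ℝ) (hγ : 0 < γ) (hD : 0 ≤ D)
    (h1 : ∀ v ∈ Set.Ioc (0:ℝ) (1/2), F v ≤ D * v ^ (-γ) + F (2 * v))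
    (h2 : ∀ v ∈ Set.Ioc (1/2:ℝ) 1, F v ≤ D) :
    ∃ K : ℝ, 0 < K ∧ ∀ v ∈ Set.Ioc (0:ℝ) 1, F v ≤ K * v ^ (-γ) := by
  have hr : (2:ℝ) ^ (-γ) < 1 := Real.rpow_lt_one_of_one_lt_of_neg (by norm_num) (by linarith)
  have hr0 : (0:ℝ) < 2 ^ (-γ) := by positivity
  set r := (2:ℝ) ^ (-γ) with hrdef
  have hr' : 0 < 1 - r := by linarith
  refine ⟨(D + 1) / (1 - r), by positivity, ?_⟩
  set K := (D + 1) / (1 - r) with hK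
  have hKr : D + K * r ≤ K := by
    have : K * (1 - r) = D + 1 := by rw [hK]; field_simp
    nlinarith
  have hKD : D ≤ K := by
    have : 0 < K := by positivity
    nlinarith
  have key : ∀ n : ℕ, ∀ v ∈ Set.Ioc (0:ℝ) 1, (1/2:ℝ) ^ (n+1) < v → F v ≤ K * v ^ (-γ) := by
    have base : ∀ v ∈ Set.Ioc (1/2:ℝ) 1, F v ≤ K * v ^ (-γ) := by
      intro v hv
      have h0 : (0:ℝ) < v := by linarith [hv.1]
      have : 1 ≤ v ^ (-γ) := Real.one_le_rpow_of_pos_of_le_one_of_nonpos h0 hv.2 (by linarith)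
      have := h2 v hv
      nlinarith
    intro n
    induction n with
    | zero => intro v hv h; exact base v ⟨by simpa using h, hv.2⟩
    | succ n ih =>
      intro v hv h
      by_cases hv2 : 1/2 < v
      · exact base v ⟨hv2, hv.2⟩
      · push Not at hv2
        have h3 := h1 v ⟨hv.1, hv2⟩
        have h4 := ih (2*v) ⟨by linarith [hv.1], by linarith⟩ (by
          rw [pow_succ] at h; linarith)
        rw [Real.mul_rpow (by norm_num) hv.1.le] at h4
        have : 0 < v ^ (-γ) := Real.rpow_pos_of_pos hv.1 _
        calc F v ≤ (D + K * r) * v ^ (-γ) := by rw [← hrdef] at h4; linarith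
          _ ≤ _ := by gcongr
  intro v hv
  obtain ⟨n, hn⟩ := exists_pow_lt_of_lt_one hv.1 (show (1/2:ℝ) < 1 by norm_num)
  refine key n v hv (lt_of_le_of_lt ?_ hn)
  exact pow_le_pow_of_le_one (by norm_num) (by norm_num) (Nat.le_succ n)

/-- min(|x|^j, ...) type bounds. -/
lemma aux_integrable (μ : Measure ℝ) (hμ_mom : Integrable (fun x : ℝ => x ^ 2) μ)
    (f : ℝ → ℝ) (hf : Continuous f) (c : ℝ) (h : ∀ x, |f x| ≤ c * x ^ 2) : Integrable f μ :=
  (hμ_mom.const_mul c).mono' hf.aestronglyMeasurable (Filter.Eventually.of_forall h)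

lemma aux_step (μ : Measure ℝ) (hμ_mom : Integrable (fun x : ℝ => x ^ 2) μ)
    (f g : ℝ → ℝ) (hf : Integrable f μ) (hg : Integrable g μ) (v c : ℝ)
    (h1 : ∀ x, |x| ≤ v → f x ≤ c * x ^ 2 + g x) (h2 : ∀ x, v < |x| → f x ≤ g x) :
    ∫ x, f x ∂μ ≤ c * (∫ x in Set.Icc (-v) v, x ^ 2 ∂μ) + ∫ x, g x ∂μ := by
  have hi : Integrable (Set.indicator (Set.Icc (-v) v) (fun x : ℝ => x ^ 2)) μ :=
    hμ_mom.indicator measurableSet_Icc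
  rw [← integral_indicator measurableSet_Icc, ← integral_const_mul,
    ← integral_add (hi.const_mul c) hg]
  refine integral_mono hf ((hi.const_mul c).add hg) ?_
  intro x
  by_cases hx : |x| ≤ v
  · have : x ∈ Set.Icc (-v) v := abs_le.mp hx
    simpa [Set.indicator_of_mem this] using h1 x hx
  · have : x ∉ Set.Icc (-v) v := fun h => hx (abs_le.mpr h)
    simpa [Set.indicator_of_notMem this] using h2 x (not_le.mp hx)

lemma aux_sin (y : ℝ) : |Real.sin y - y| ≤ 2 * min |y| (y ^ 2) := by
  have h0 : |Real.sin y - y| ≤ 2 * |y| := by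
    calc _ ≤ |Real.sin y| + |y| := abs_sub _ _
      _ ≤ _ := by linarith [Real.abs_sin_le_abs (x := y)]
  rw [mul_min_of_nonneg _ _ (by norm_num)]
  refine le_min h0 ?_
  rcases le_total 1 |y| with h | h
  · rw [← sq_abs]; nlinarith
  · have pos : ∀ z : ℝ, 0 < z → z ≤ 1 → |Real.sin z - z| ≤ 2 * z ^ 2 := by
      intro z hz hz1
      have := Real.sin_gt_sub_cube hz
      have := Real.sin_lt hz
      rw [abs_le]; constructor <;> nlinarith [pow_pos hz 2, mul_le_mul_of_nonneg_left hz1 (pow_pos hz 2).le]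
    rcases lt_trichotomy y 0 with hy | hy | hy
    · rw [abs_of_neg hy] at h
      have := pos (-y) (by linarith) h
      rw [Real.sin_neg, ← abs_neg] at this
      simpa [sub_eq_add_neg, add_comm] using this
    · simp [hy]
    · rw [abs_of_pos hy] at h
      exact pos y hy h

lemma aux_cos (y : ℝ) : |1 - Real.cos y| ≤ 2 * min 1 (y ^ 2) := by
  have := Real.one_sub_sq_div_two_le_cos (x := y)
  have := Real.neg_one_le_cos y
  have := Real.cos_le_one y
  rw [abs_of_nonneg (by linarith), mul_min_of_nonneg _ _ (by norm_num)]
  exact le_min (by linarith) (by nlinarith [sq_nonneg y])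

lemma aux_cos_lower (y : ℝ) (hy : |y| ≤ 1) : y ^ 2 ≤ 8 * (1 - Real.cos y) := by
  have h3 := Real.pi_gt_three
  have h4 := Real.pi_le_four
  have h := Real.cos_le_one_sub_mul_cos_sq (x := y) (by linarith)
  have h5 : 1 / 8 ≤ 2 / Real.pi ^ 2 := by
    rw [div_le_div_iff₀ (by norm_num) (by positivity)]
    nlinarith
  nlinarith [mul_le_mul_of_nonneg_right h5 (sq_nonneg y)]

lemma aux_exp (a b : ℝ) (ha : 0 ≤ a) :
    1 - Real.exp (-a) * Real.cos b ≤ a + b ^ 2 / 2 := by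
  have h1 := Real.add_one_le_exp (-a)
  have h2 := Real.one_sub_sq_div_two_le_cos (x := b)
  have h3 : Real.exp (-a) ≤ 1 := by simpa using ha
  have h4 := Real.exp_pos (-a)
  have : Real.exp (-a) * (1 - b^2/2) ≤ Real.exp (-a) * Real.cos b := by gcongr
  nlinarith [sq_nonneg b]

lemma aux_main (μ ν : Measure ℝ) [IsProbabilityMeasure ν]
    (hμ_mom : Integrable (fun x : ℝ => x ^ 2) μ) (t v : ℝ) (ht : 0 < t) (hv : 0 < v)
    (hchar : ∀ u : ℝ,
      ∫ x : ℝ, Complex.exp (Complex.I * (u : ℂ) * (x : ℂ)) ∂ν =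
        Complex.exp ((t : ℂ) *
          ∫ x : ℝ, (Complex.exp (Complex.I * (u : ℂ) * (x : ℂ)) - 1
            - Complex.I * (u : ℂ) * (x : ℂ)) ∂μ)) :
    ∫ x in Set.Icc (-v) v, x ^ 2 ∂ν ≤ 8 * v ^ 2 *
      (t * (2 * ∫ x, min 1 (x ^ 2 / v ^ 2) ∂μ) +
        t ^ 2 * (2 / v * ∫ x, min |x| (x ^ 2 / v) ∂μ) ^ 2 / 2) := by
  set u := v⁻¹ with hu
  have hu0 : 0 < u := by positivity
  have hmin1 : ∀ x : ℝ, min 1 ((u * x) ^ 2) = min 1 (x ^ 2 / v ^ 2) := by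
    intro x; congr 1; rw [hu]; field_simp
  have hmin2 : ∀ x : ℝ, min |u * x| ((u * x) ^ 2) = 1 / v * min |x| (x ^ 2 / v) := by
    intro x
    rw [mul_min_of_nonneg _ _ (by positivity), abs_mul, abs_of_pos hu0, hu]
    congr 1 <;> field_simp
  have iA : Integrable (fun x => 1 - Real.cos (u * x)) μ := by
    refine aux_integrable μ hμ_mom _ (by fun_prop) (2 * u^2) fun x => (aux_cos _).trans ?_
    have := min_le_right 1 ((u * x)^2)
    nlinarith
  have iB : Integrable (fun x => Real.sin (u * x) - u * x) μ := by
    refine aux_integrable μ hμ_mom _ (by fun_prop) (2 * u^2) fun x => (aux_sin _).trans ?_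
    have := min_le_right |u * x| ((u * x)^2)
    nlinarith
  have i1 : Integrable (fun x : ℝ => min 1 (x ^ 2 / v ^ 2)) μ := by
    refine aux_integrable μ hμ_mom _ (by fun_prop) (1 / v^2) fun x => ?_
    rw [abs_of_nonneg (by positivity)]
    exact (min_le_right _ _).trans (by rw [div_mul_eq_mul_div, one_mul])
  have i2 : Integrable (fun x : ℝ => min |x| (x ^ 2 / v)) μ := by
    refine aux_integrable μ hμ_mom _ (by fun_prop) (1 / v) fun x => ?_
    rw [abs_of_nonneg (by positivity)]
    exact (min_le_right _ _).trans (by rw [div_mul_eq_mul_div, one_mul])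
  set A := ∫ x, (1 - Real.cos (u * x)) ∂μ with hA
  set B := ∫ x, (Real.sin (u * x) - u * x) ∂μ with hB
  have hA0 : 0 ≤ A := integral_nonneg fun x => by
    have := Real.cos_le_one (u * x); simpa using this
  have hA1 : A ≤ 2 * ∫ x, min 1 (x ^ 2 / v ^ 2) ∂μ := by
    rw [← integral_const_mul]
    refine integral_mono iA (i1.const_mul 2) fun x => ?_
    have := (le_abs_self _).trans (aux_cos (u * x))
    rwa [hmin1] at this
  have hB1 : |B| ≤ 2 / v * ∫ x, min |x| (x ^ 2 / v) ∂μ := by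
    rw [← integral_const_mul]
    refine (abs_integral_le_integral_abs).trans
      (integral_mono iB.abs (i2.const_mul _) fun x => ?_)
    have := aux_sin (u * x)
    rw [hmin2] at this
    refine this.trans (le_of_eq ?_)
    ring
  have hexp : ∀ x : ℝ, Complex.exp (Complex.I * (u : ℂ) * (x : ℂ)) =
      (Real.cos (u * x) : ℂ) + (Real.sin (u * x) : ℂ) * Complex.I := by
    intro x
    rw [show Complex.I * (u : ℂ) * (x : ℂ) = ((u * x : ℝ) : ℂ) * Complex.I by push_cast; ring,
      Complex.exp_mul_I]
    simp
  have hpsi : ∫ x : ℝ, (Complex.exp (Complex.I * (u : ℂ) * (x : ℂ)) - 1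
            - Complex.I * (u : ℂ) * (x : ℂ)) ∂μ = -(A : ℂ) + (B : ℂ) * Complex.I := by
    rw [hA, hB, ← integral_complex_ofReal, ← integral_complex_ofReal, ← integral_neg,
      ← integral_mul_const]
    have jA : Integrable (fun x : ℝ => -((1 - Real.cos (u * x) : ℝ) : ℂ)) μ := iA.ofReal.neg
    have jB : Integrable (fun x : ℝ => ((Real.sin (u * x) - u * x : ℝ) : ℂ) * Complex.I) μ :=
      iB.ofReal.mul_const _
    rw [← integral_add jA jB]
    congr 1
    ext x
    rw [hexp]
    push_cast
    ring
  have icos : Integrable (fun x => Real.cos (u * x)) ν :=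
    Integrable.of_bound (by fun_prop) 1
      (Filter.Eventually.of_forall fun x => by simpa using Real.abs_cos_le_one _)
  have isin : Integrable (fun x => Real.sin (u * x)) ν :=
    Integrable.of_bound (by fun_prop) 1
      (Filter.Eventually.of_forall fun x => by simpa using Real.abs_sin_le_one _)
  have hphi : ∫ x : ℝ, Complex.exp (Complex.I * (u : ℂ) * (x : ℂ)) ∂ν =
      ((∫ x, Real.cos (u * x) ∂ν : ℝ) : ℂ) + ((∫ x, Real.sin (u * x) ∂ν : ℝ) : ℂ) * Complex.I := by
    rw [← integral_complex_ofReal, ← integral_complex_ofReal,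
      ← integral_mul_const]
    have jA : Integrable (fun x : ℝ => ((Real.cos (u * x) : ℝ) : ℂ)) ν := icos.ofReal
    have jB : Integrable (fun x : ℝ => ((Real.sin (u * x) : ℝ) : ℂ) * Complex.I) ν :=
      isin.ofReal.mul_const _
    rw [← integral_add jA jB]
    congr 1
    ext x
    rw [hexp]
  have hre : ∫ x, Real.cos (u * x) ∂ν = Real.exp (-(t * A)) * Real.cos (t * B) := by
    have h := congrArg Complex.re (hchar u)
    rw [hphi, hpsi, Complex.exp_re] at h
    simpa using h
  have hfin : ∫ x in Set.Icc (-v) v, x ^ 2 ∂ν ≤ 8 * v ^ 2 * (1 - ∫ x, Real.cos (u * x) ∂ν) := by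
    have e : 1 - ∫ x, Real.cos (u * x) ∂ν = ∫ x, (1 - Real.cos (u * x)) ∂ν := by
      rw [integral_sub (integrable_const _) icos]; simp
    have i3 : Integrable (fun x => 1 - Real.cos (u * x)) ν := (integrable_const _).sub icos
    rw [e, ← integral_const_mul, ← integral_indicator measurableSet_Icc]
    refine integral_mono_of_nonneg (Filter.Eventually.of_forall fun x => ?_) (i3.const_mul _)
      (Filter.Eventually.of_forall fun x => ?_)
    · exact Set.indicator_nonneg (fun x _ => sq_nonneg x) x
    · have hc := Real.cos_le_one (u * x)
      by_cases hx : x ∈ Set.Icc (-v) v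
      · have hux : |u * x| ≤ 1 := by
          rw [abs_mul, abs_of_pos hu0, hu, inv_mul_le_iff₀ hv, mul_one]
          exact abs_le.mpr hx
        have hl := aux_cos_lower (u * x) hux
        rw [Set.indicator_of_mem hx]
        have hxe : x ^ 2 = v ^ 2 * (u * x) ^ 2 := by rw [hu]; field_simp
        show x ^ 2 ≤ 8 * v ^ 2 * (1 - Real.cos (u * x))
        rw [hxe]
        nlinarith [mul_le_mul_of_nonneg_left hl (sq_nonneg v)]
      · rw [Set.indicator_of_notMem hx]
        have : 0 ≤ 1 - Real.cos (u * x) := by linarith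
        show 0 ≤ 8 * v ^ 2 * (1 - Real.cos (u * x))
        positivity
  refine hfin.trans ?_
  rw [hre]
  have h5 := aux_exp (t * A) (t * B) (by positivity)
  have h6 : B ^ 2 ≤ (2 / v * ∫ x, min |x| (x ^ 2 / v) ∂μ) ^ 2 := by
    rw [← sq_abs]; gcongr
  refine mul_le_mul_of_nonneg_left (h5.trans ?_) (by positivity)
  rw [mul_pow]
  gcongr

theorem small_time_truncated_second_moment_bound
    (μ : Measure ℝ)
    (hμ_supp : μ (Set.Icc (-1 : ℝ) 1)ᶜ = 0)
    (hμ_mom : Integrable (fun x : ℝ => x ^ 2) μ)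
    (α C : ℝ) (hα : α ∈ Set.Ioo (0 : ℝ) 2) (hC : 0 < C)
    (hμ_small : ∀ v ∈ Set.Ioc (0 : ℝ) 1,
      ∫ x in Set.Icc (-v) v, x ^ 2 ∂μ ≤ C * v ^ (2 - α))
    (ν : ℝ → Measure ℝ)
    (hν_prob : ∀ t : ℝ, 0 < t → IsProbabilityMeasure (ν t))
    (hν_char : ∀ t : ℝ, 0 < t → ∀ u : ℝ,
      ∫ x : ℝ, Complex.exp (Complex.I * (u : ℂ) * (x : ℂ)) ∂(ν t) =
        Complex.exp ((t : ℂ) *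
          ∫ x : ℝ, (Complex.exp (Complex.I * (u : ℂ) * (x : ℂ)) - 1
            - Complex.I * (u : ℂ) * (x : ℂ)) ∂μ))
    (β : ℝ) (hβ : β ∈ Set.Ioo (0 : ℝ) (1 / 2)) :
    ∃ C' > (0 : ℝ), ∃ t₀ ∈ Set.Ioc (0 : ℝ) 1, ∀ t ∈ Set.Ioc (0 : ℝ) t₀,
      ∫ x in Set.Icc (-(t ^ β)) (t ^ β), x ^ 2 ∂(ν t) ≤ C' * t ^ (1 + β * (2 - α)) := by
  obtain ⟨hα0, hα2⟩ := hα
  obtain ⟨hβ0, hβ2⟩ := hβ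
  set M := ∫ x, x ^ 2 ∂μ with hM
  have hM0 : 0 ≤ M := integral_nonneg fun x => sq_nonneg x
  have i1 : ∀ v : ℝ, 0 < v → Integrable (fun x : ℝ => min 1 (x ^ 2 / v ^ 2)) μ := by
    intro v hv
    refine aux_integrable μ hμ_mom _ (by fun_prop) (1 / v^2) fun x => ?_
    rw [abs_of_nonneg (by positivity)]
    exact (min_le_right _ _).trans (by rw [div_mul_eq_mul_div, one_mul])
  have i2 : ∀ v : ℝ, 0 < v → Integrable (fun x : ℝ => min |x| (x ^ 2 / v)) μ := by
    intro v hv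
    refine aux_integrable μ hμ_mom _ (by fun_prop) (1 / v) fun x => ?_
    rw [abs_of_nonneg (by positivity)]
    exact (min_le_right _ _).trans (by rw [div_mul_eq_mul_div, one_mul])
  -- bound on ∫_{[-2v,2v]}
  have hsm : ∀ v ∈ Set.Ioc (0:ℝ) (1/2),
      ∫ x in Set.Icc (-(2 * v)) (2 * v), x ^ 2 ∂μ ≤ 4 * C * v ^ (2 - α) := by
    intro v hv
    have h := hμ_small (2 * v) ⟨by linarith [hv.1], by linarith [hv.2]⟩
    rw [Real.mul_rpow (by norm_num) hv.1.le] at h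
    have h4 : (2:ℝ) ^ (2 - α) ≤ 4 := by
      calc (2:ℝ) ^ (2 - α) ≤ 2 ^ (2:ℝ) :=
            Real.rpow_le_rpow_of_exponent_le (by norm_num) (by linarith)
        _ = 4 := by norm_num
    have h5 : 0 ≤ v ^ (2 - α) := Real.rpow_nonneg hv.1.le _
    have h6 : 2 ^ (2 - α) * v ^ (2 - α) ≤ 4 * v ^ (2 - α) := by gcongr
    nlinarith
  obtain ⟨K1, hK1, hF1⟩ := aux_recursion (fun v => ∫ x, min 1 (x ^ 2 / v ^ 2) ∂μ) α
    (4 * C + 4 * M) hα0 (by positivity) (by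
      intro v hv
      have hv0 := hv.1
      have hs := aux_step μ hμ_mom _ _ (i1 v hv0) (i1 (2 * v) (by linarith)) (2 * v) (1 / v ^ 2)
        (fun x _ => by
          have : 0 ≤ min 1 (x ^ 2 / (2 * v) ^ 2) := by positivity
          have h7 := min_le_right 1 (x ^ 2 / v ^ 2)
          have : 1 / v ^ 2 * x ^ 2 = x ^ 2 / v ^ 2 := by ring
          linarith)
        (fun x hx => by
          have : 1 ≤ x ^ 2 / (2 * v) ^ 2 := by
            rw [one_le_div (by positivity), ← sq_abs x]
            gcongr
          rw [min_eq_left this]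
          exact min_le_left _ _)
      have h8 : 1 / v ^ 2 * (∫ x in Set.Icc (-(2 * v)) (2 * v), x ^ 2 ∂μ)
          ≤ 1 / v ^ 2 * (4 * C * v ^ (2 - α)) := by gcongr; exact hsm v hv
      have h9 : 1 / v ^ 2 * (4 * C * v ^ (2 - α)) = 4 * C * v ^ (-α) := by
        rw [sub_eq_add_neg, Real.rpow_add hv0, Real.rpow_two]; field_simp
      have h10 : 0 ≤ M * v ^ (-α) := by positivity
      show _ ≤ _ + ∫ x, min 1 (x ^ 2 / (2 * v) ^ 2) ∂μ
      nlinarith)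
    (by
      intro v hv
      have hv0 : 0 < v := by linarith [hv.1]
      have : ∫ x, min 1 (x ^ 2 / v ^ 2) ∂μ ≤ 4 * M := by
        rw [hM, ← integral_const_mul]
        refine integral_mono (i1 v hv0) (hμ_mom.const_mul 4) fun x => (min_le_right _ _).trans ?_
        show x ^ 2 / v ^ 2 ≤ 4 * x ^ 2
        rw [div_le_iff₀ (by positivity)]
        have : 1 ≤ 4 * v ^ 2 := by nlinarith [hv.1]
        nlinarith [sq_nonneg x]
      show ∫ x, min 1 (x ^ 2 / v ^ 2) ∂μ ≤ _
      linarith)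
  obtain ⟨K2, hK2, hF2⟩ := aux_recursion (fun v => ∫ x, min |x| (x ^ 2 / v) ∂μ) (α / 2)
    (4 * C + 4 * M) (by linarith) (by positivity) (by
      intro v hv
      have hv0 := hv.1
      have hs := aux_step μ hμ_mom _ _ (i2 v hv0) (i2 (2 * v) (by linarith)) (2 * v) (1 / v)
        (fun x _ => by
          have : 0 ≤ min |x| (x ^ 2 / (2 * v)) := by positivity
          have h7 := min_le_right |x| (x ^ 2 / v)
          have : 1 / v * x ^ 2 = x ^ 2 / v := by ring
          linarith)
        (fun x hx => by
          have : |x| ≤ x ^ 2 / (2 * v) := by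
            rw [le_div_iff₀ (by positivity), ← sq_abs x]
            nlinarith [abs_nonneg x]
          rw [min_eq_left this]
          exact min_le_left _ _)
      have h8 : 1 / v * (∫ x in Set.Icc (-(2 * v)) (2 * v), x ^ 2 ∂μ)
          ≤ 1 / v * (4 * C * v ^ (2 - α)) := by gcongr; exact hsm v hv
      have h9 : 1 / v * (4 * C * v ^ (2 - α)) = 4 * C * v ^ (1 - α) := by
        rw [show 2 - α = 1 + (1 - α) by ring, Real.rpow_add hv0, Real.rpow_one]; field_simp
      have h10 : 0 ≤ M * v ^ (-(α / 2)) := by positivity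
      have h11 : v ^ (1 - α) ≤ v ^ (-(α / 2)) :=
        Real.rpow_le_rpow_of_exponent_ge hv0 (by linarith [hv.2]) (by linarith)
      have h12 : 4 * C * v ^ (1 - α) ≤ 4 * C * v ^ (-(α / 2)) := by gcongr
      show _ ≤ _ + ∫ x, min |x| (x ^ 2 / (2 * v)) ∂μ
      nlinarith)
    (by
      intro v hv
      have hv0 : 0 < v := by linarith [hv.1]
      have : ∫ x, min |x| (x ^ 2 / v) ∂μ ≤ 4 * M := by
        rw [hM, ← integral_const_mul]
        refine integral_mono (i2 v hv0) (hμ_mom.const_mul 4) fun x => (min_le_right _ _).trans ?_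
        show x ^ 2 / v ≤ 4 * x ^ 2
        rw [div_le_iff₀ (by positivity)]
        nlinarith [sq_nonneg x, hv.1]
      show ∫ x, min |x| (x ^ 2 / v) ∂μ ≤ _
      linarith)
  refine ⟨8 * (2 * K1 + 2 * K2 ^ 2), by positivity, 1, ⟨one_pos, le_rfl⟩, ?_⟩
  intro t ⟨ht0, ht1⟩
  haveI := hν_prob t ht0
  set v := t ^ β with hv
  have hv0 : 0 < v := Real.rpow_pos_of_pos ht0 _
  have hv1 : v ≤ 1 := Real.rpow_le_one ht0.le ht1 hβ0.le
  have htv : t ≤ v ^ 2 := by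
    rw [hv, ← Real.rpow_natCast, ← Real.rpow_mul ht0.le]
    calc t = t ^ (1:ℝ) := (Real.rpow_one t).symm
      _ ≤ _ := Real.rpow_le_rpow_of_exponent_ge ht0 ht1 (by push_cast; linarith)
  refine (aux_main μ (ν t) hμ_mom t v ht0 hv0 (hν_char t ht0)).trans ?_
  have e1 := hF1 v ⟨hv0, hv1⟩
  have e2 := hF2 v ⟨hv0, hv1⟩
  have n2 : 0 ≤ ∫ x, min |x| (x ^ 2 / v) ∂μ := integral_nonneg fun x => by
    show 0 ≤ min |x| (x ^ 2 / v)
    positivity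
  have hw : t ^ (1 + β * (2 - α)) = t * (v ^ 2 * v ^ (-α)) := by
    rw [Real.rpow_add ht0, Real.rpow_one, Real.rpow_mul ht0.le, ← hv, sub_eq_add_neg,
      Real.rpow_add hv0, Real.rpow_two]
  have hsq : (v ^ (-(α / 2))) ^ 2 = v ^ (-α) := by
    rw [← Real.rpow_natCast, ← Real.rpow_mul hv0.le]; congr 1; push_cast; ring
  calc _ ≤ 8 * v ^ 2 * (t * (2 * (K1 * v ^ (-α))) +
        t ^ 2 * (2 / v * (K2 * v ^ (-(α / 2)))) ^ 2 / 2) := by gcongr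
    _ = 8 * v ^ 2 * (t * (2 * (K1 * v ^ (-α))) +
        t * (t / v ^ 2) * (2 * K2 ^ 2 * v ^ (-α))) := by
        rw [← hsq]; field_simp
    _ ≤ 8 * v ^ 2 * (t * (2 * (K1 * v ^ (-α))) +
        t * 1 * (2 * K2 ^ 2 * v ^ (-α))) := by
        have : t / v ^ 2 ≤ 1 := by rw [div_le_one (by positivity)]; exact htv
        gcongr
    _ = _ := by rw [hw]; ring
end

section
/- Let μ be a Borel measure on ℝ with μ(ℝ ∖ [−1,1]) = 0 and ∫_ℝ x² dμ(x) < ∞, and let f : ℝ → ℂ be a C^∞ function with compact support such that f(0) = 0 and f′(0) = 0. Then f is μ-integrable, for every u ∈ ℝ the integral ψ̄(u) := ∫_ℝ (e^{−iux} − 1 + iux) dμ(x) converges absolutely, the function u ↦ (𝓕f)(u) · ψ̄(u) is integrable on ℝ, and (2π)^{−1} ∫_ℝ (𝓕f)(u) · ψ̄(u) du = ∫_ℝ f dμ. (This is the computation of the leading term in the proof of Proposition 4.1.) -/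
open MeasureTheory

open scoped FourierTransform

/-- The Fourier transform with the convention of the paper. -/
noncomputable def ltF (g : ℝ → ℂ) (u : ℝ) : ℂ :=
  ∫ x : ℝ, Complex.exp (Complex.I * (u : ℂ) * (x : ℂ)) * g x

lemma ltF_eq (g : ℝ → ℂ) (u : ℝ) : ltF g u = 𝓕 g (u / (-(2 * Real.pi))) := by
  rw [Real.fourier_real_eq_integral_exp_smul, ltF]
  congr 1
  ext x
  rw [smul_eq_mul]
  congr 2
  push_cast
  have : (Real.pi : ℂ) ≠ 0 := by exact_mod_cast Real.pi_ne_zero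
  field_simp

lemma ltF_props (g : ℝ → ℂ) (hs : ContDiff ℝ (⊤ : ℕ∞) g) (hc : HasCompactSupport g) :
    Continuous (ltF g) ∧ (∀ k : ℕ, Integrable (fun u : ℝ => ‖u‖ ^ k * ‖ltF g u‖)) ∧
    ∀ x : ℝ, ∫ u : ℝ, ltF g u * Complex.exp (-(Complex.I * (u : ℂ) * (x : ℂ)))
      = 2 * Real.pi * g x := by
  have hpi : (-(2 * Real.pi)) ≠ 0 := by
    have := Real.pi_pos
    linarith
  have hpi' : (Real.pi : ℂ) ≠ 0 := by exact_mod_cast Real.pi_ne_zero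
  set S : SchwartzMap ℝ ℂ := hc.toSchwartzMap hs with hS
  have hSg : (S : ℝ → ℂ) = g := rfl
  have hF : ltF g = fun u => (𝓕 S) (u / (-(2 * Real.pi))) := by
    ext u
    rw [ltF_eq, SchwartzMap.fourier_coe, hSg]
  refine ⟨?_, ?_, ?_⟩
  · rw [hF]
    exact (𝓕 S).continuous.comp (by fun_prop)
  · intro k
    have h1 := (𝓕 S).integrable_pow_mul volume k
    have h2 := (h1.comp_div hpi).const_mul ((2 * Real.pi) ^ k)
    refine h2.congr (Filter.Eventually.of_forall fun u => ?_)
    simp only [hF]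
    rw [norm_div, norm_neg, Real.norm_of_nonneg (by positivity : (0:ℝ) ≤ 2 * Real.pi), div_pow]
    have := Real.pi_pos
    field_simp
  · intro x
    have h1 : 𝓕⁻ (𝓕 g) x = g x := by
      have := hs.continuous.fourierInv_fourier_eq (hSg ▸ S.integrable)
        (by rw [← hSg, ← SchwartzMap.fourier_coe]; exact (𝓕 S).integrable)
      rw [this]
    have h2 := Measure.integral_comp_div
      (fun w : ℝ => 𝓕 g w * Complex.exp (2 * Real.pi * Complex.I * w * x)) (-(2 * Real.pi))
    rw [Real.fourierInv_eq'] at h1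
    rw [← h1]
    trans ∫ u : ℝ, (fun w : ℝ => 𝓕 g w * Complex.exp (2 * Real.pi * Complex.I * w * x))
      (u / (-(2 * Real.pi)))
    · congr 1
      ext u
      simp only [ltF_eq]
      congr 2
      push_cast
      field_simp
    · rw [h2, abs_neg, abs_of_pos (by positivity), Complex.real_smul]
      push_cast
      congr 2
      ext w
      rw [smul_eq_mul, mul_comm]
      congr 2
      simp
      ring

lemma lt_kernel_bound (u x : ℝ) : ‖Complex.exp (-(Complex.I * (u : ℂ) * (x : ℂ))) - 1
          + Complex.I * (u : ℂ) * (x : ℂ)‖ ≤ 3 * u ^ 2 * x ^ 2 := by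
  set z : ℂ := -(Complex.I * (u : ℂ) * (x : ℂ)) with hz
  have hzz : Complex.I * (u : ℂ) * (x : ℂ) = -z := by rw [hz]; ring
  rw [hzz, ← sub_eq_add_neg]
  have hn : ‖z‖ ^ 2 = u ^ 2 * x ^ 2 := by
    rw [hz]
    simp [mul_pow]
  have he : ‖Complex.exp z‖ = 1 := by
    rw [Complex.norm_exp]
    simp [hz]
  rw [mul_assoc, ← hn]
  by_cases h : ‖z‖ ≤ 1
  · have := Complex.norm_exp_sub_one_sub_id_le h
    nlinarith [sq_nonneg ‖z‖]
  · push Not at h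
    have h1 := norm_sub_le (Complex.exp z - 1) z
    have h2 := norm_sub_le (Complex.exp z) 1
    rw [he, norm_one] at h2
    nlinarith

lemma lt_inner (f : ℝ → ℂ) (hs : ContDiff ℝ (⊤ : ℕ∞) f) (hc : HasCompactSupport f)
    (hf0 : f 0 = 0) (hf'0 : deriv f 0 = 0) (x : ℝ) :
    ∫ u : ℝ, ltF f u * (Complex.exp (-(Complex.I * (u : ℂ) * (x : ℂ))) - 1
          + Complex.I * (u : ℂ) * (x : ℂ)) = 2 * Real.pi * f x := by
  obtain ⟨hcont, hint, hinv⟩ := ltF_props f hs hc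
  have hs' : ContDiff ℝ (⊤ : ℕ∞) (deriv f) := by
    have : ContDiff ℝ ((⊤ : ℕ∞) + 1) f := hs
    exact (contDiff_succ_iff_deriv.1 this).2.2
  obtain ⟨-, -, hinv'⟩ := ltF_props (deriv f) hs' hc.deriv
  have hpi' : (Real.pi : ℂ) ≠ 0 := by exact_mod_cast Real.pi_ne_zero
  have hd : ∀ u : ℝ, ltF (deriv f) u = -(Complex.I * u * ltF f u) := by
    intro u
    rw [ltF_eq, ltF_eq, Real.fourier_deriv (hs.continuous.integrable_of_hasCompactSupport hc)
      (hs.differentiable (by simp)) (hs'.continuous.integrable_of_hasCompactSupport hc.deriv)]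
    simp only [smul_eq_mul]
    push_cast
    field_simp
  have h0 := hinv 0
  have h0' := hinv' 0
  simp only [hd, hf0, hf'0, Complex.ofReal_zero, mul_zero, neg_zero, Complex.exp_zero, mul_one]
    at h0 h0'
  have i0 : Integrable (ltF f) := by
    refine (hint 0).mono' hcont.aestronglyMeasurable (Filter.Eventually.of_forall fun u => ?_)
    simp
  have i1 : Integrable (fun u : ℝ => -(Complex.I * u * ltF f u)) := by
    refine (hint 1).mono' (by fun_prop) (Filter.Eventually.of_forall fun u => ?_)
    simp
  have i2 : Integrable (fun u : ℝ => ltF f u * Complex.exp (-(Complex.I * (u : ℂ) * (x : ℂ)))) := by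
    refine (hint 0).mono' (by fun_prop) (Filter.Eventually.of_forall fun u => ?_)
    simp [Complex.norm_exp]
  have e : ∀ u : ℝ, ltF f u * (Complex.exp (-(Complex.I * (u : ℂ) * (x : ℂ))) - 1
          + Complex.I * (u : ℂ) * (x : ℂ)) =
      (ltF f u * Complex.exp (-(Complex.I * (u : ℂ) * (x : ℂ))) - ltF f u)
        - -(Complex.I * u * ltF f u) * x := by
    intro u; ring
  have i3 : Integrable (fun u : ℝ =>
      ltF f u * Complex.exp (-(Complex.I * (u : ℂ) * (x : ℂ))) - ltF f u) := i2.sub i0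
  simp_rw [e]
  rw [integral_sub i3 (i1.mul_const _), integral_sub i2 i0, hinv, h0,
    integral_mul_const, h0']
  simp

theorem leading_term_identity
    (μ : Measure ℝ)
    (hμ_supp : μ (Set.Icc (-1 : ℝ) 1)ᶜ = 0)
    (hμ_mom : Integrable (fun x : ℝ => x ^ 2) μ)
    (f : ℝ → ℂ) (hf_smooth : ContDiff ℝ (⊤ : ℕ∞) f) (hf_supp : HasCompactSupport f)
    (hf0 : f 0 = 0) (hf'0 : deriv f 0 = 0) :
    Integrable f μ ∧
      (∀ u : ℝ, Integrable (fun x : ℝ =>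
        Complex.exp (-(Complex.I * (u : ℂ) * (x : ℂ))) - 1
          + Complex.I * (u : ℂ) * (x : ℂ)) μ) ∧
      Integrable (fun u : ℝ =>
        (∫ x : ℝ, Complex.exp (Complex.I * (u : ℂ) * (x : ℂ)) * f x) *
          (∫ x : ℝ, (Complex.exp (-(Complex.I * (u : ℂ) * (x : ℂ))) - 1
            + Complex.I * (u : ℂ) * (x : ℂ)) ∂μ)) volume ∧
      (2 * Real.pi : ℂ)⁻¹ *
          (∫ u : ℝ,
            (∫ x : ℝ, Complex.exp (Complex.I * (u : ℂ) * (x : ℂ)) * f x) *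
              (∫ x : ℝ, (Complex.exp (-(Complex.I * (u : ℂ) * (x : ℂ))) - 1
                + Complex.I * (u : ℂ) * (x : ℂ)) ∂μ)) =
        ∫ x : ℝ, f x ∂μ := by
  have hpi' : (Real.pi : ℂ) ≠ 0 := by exact_mod_cast Real.pi_ne_zero
  obtain ⟨hcont, hint, -⟩ := ltF_props f hf_smooth hf_supp
  have hinner := lt_inner f hf_smooth hf_supp hf0 hf'0
  have hfold : ∀ u : ℝ, (∫ x : ℝ, Complex.exp (Complex.I * (u : ℂ) * (x : ℂ)) * f x) = ltF f u :=
    fun u => rfl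
  simp_rw [hfold]
  set s : Set ℝ := {0}ᶜ with hs
  set ν := μ.restrict s with hν
  have hsupp : Function.support (fun x : ℝ => x ^ 2) = s := by
    ext x
    simp [hs]
  have : SigmaFinite ν := by
    obtain ⟨t, ht, h0, hsf⟩ := hμ_mom.aefinStronglyMeasurable.exists_set_sigmaFinite
    have h1 : μ (s ∩ tᶜ) = 0 := by
      have h2 := (ae_restrict_iff' ht.compl).1 h0
      refine measure_mono_null ?_ h2
      rintro x ⟨hx, hxt⟩ h3
      have := h3 hxt
      simp at this
      exact hx this
    have h2 : ν = (μ.restrict t).restrict s := by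
      rw [hν, Measure.restrict_restrict (by measurability)]
      refine Measure.restrict_congr_set ?_
      refine (Filter.EventuallyLE.antisymm ?_ ?_)
      · refine (ae_le_set).2 ?_
        rwa [Set.sdiff_self_inter]
      · exact Filter.Eventually.of_forall fun x hx => hx.1
    rw [h2]
    infer_instance
  have hintr : ∀ u : ℝ, Integrable (fun x : ℝ =>
        Complex.exp (-(Complex.I * (u : ℂ) * (x : ℂ))) - 1
          + Complex.I * (u : ℂ) * (x : ℂ)) μ := by
    intro u
    refine (hμ_mom.const_mul (3 * u ^ 2)).mono' ?_ (Filter.Eventually.of_forall fun x =>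
      lt_kernel_bound u x)
    exact Continuous.aestronglyMeasurable (by fun_prop)
  have hres : ∀ g : ℝ → ℂ, g 0 = 0 → ∫ x, g x ∂μ = ∫ x, g x ∂ν := by
    intro g hg
    refine (setIntegral_eq_integral_of_forall_compl_eq_zero fun x hx => ?_).symm
    simp [hs] at hx
    rw [hx, hg]
  have hprod : Integrable (fun p : ℝ × ℝ => ltF f p.1 *
      (Complex.exp (-(Complex.I * (p.1 : ℂ) * (p.2 : ℂ))) - 1
          + Complex.I * (p.1 : ℂ) * (p.2 : ℂ))) (volume.prod ν) := by
    have h1 : Integrable (fun x : ℝ => x ^ 2) ν := hμ_mom.restrict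
    refine (((hint 2).const_mul 3).mul_prod h1).mono' (Continuous.aestronglyMeasurable (by fun_prop))
      (Filter.Eventually.of_forall fun p => ?_)
    rw [norm_mul]
    have h2 := mul_le_mul_of_nonneg_left (lt_kernel_bound p.1 p.2) (norm_nonneg (ltF f p.1))
    refine h2.trans (le_of_eq ?_)
    rw [Real.norm_eq_abs, sq_abs]
    ring
  have hk : ∀ u : ℝ, ∫ x : ℝ, (Complex.exp (-(Complex.I * (u : ℂ) * (x : ℂ))) - 1
                + Complex.I * (u : ℂ) * (x : ℂ)) ∂μ =
      ∫ x : ℝ, (Complex.exp (-(Complex.I * (u : ℂ) * (x : ℂ))) - 1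
                + Complex.I * (u : ℂ) * (x : ℂ)) ∂ν := fun u => hres _ (by simp)
  refine ⟨?_, hintr, ?_, ?_⟩
  · have h1 := hprod.integral_prod_right
    simp only [hinner] at h1
    have h2 : Integrable f ν := by
      have := h1.const_mul (2 * Real.pi : ℂ)⁻¹
      refine this.congr (Filter.Eventually.of_forall fun x => ?_)
      simp only
      field_simp
    refine (integrableOn_iff_integrable_of_support_subset ?_).1 h2
    intro x hx h
    simp at h
    exact hx (h ▸ hf0)
  · have h1 := hprod.integral_prod_left
    simp only [integral_const_mul] at h1
    simp_rw [hk]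
    exact h1
  · simp_rw [hk, ← integral_const_mul (ltF f _)]
    rw [integral_integral_swap hprod]
    simp_rw [hinner]
    rw [integral_const_mul, hres f hf0]
    field_simp
end

section
/- Define ψ(u) := ∫_ℝ (e^{iux} − 1 − iux) dμ(x) for u ∈ ℝ, which converges absolutely. Let f : ℝ → ℂ be a C^∞ function with compact support such that f(0) = 0 and f′(0) = 0. Then for every t > 0, ∫_ℝ f dν_t = t ∫_ℝ f dμ + (2π)^{−1} ∫_ℝ (𝓕f)(u) · conj( e^{t ψ(u)} − 1 − t ψ(u) ) du, where conj denotes complex conjugation and all integrals appearing converge absolutely. (This is the decomposition (4.5)–(4.6) in the proof of Proposition 4.1: the linearization of the characteristic function exp(tψ) plus an explicit remainder.) -/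
open MeasureTheory

open scoped FourierTransform SchwartzMap ContDiff in
theorem aux_fourier (f : ℝ → ℂ) (hf_smooth : ContDiff ℝ (⊤ : ℕ∞) f)
    (hf_supp : HasCompactSupport f) (F : ℝ → ℂ)
    (hF : ∀ u : ℝ, F u = ∫ x : ℝ, Complex.exp (Complex.I * (u : ℂ) * (x : ℂ)) * f x) :
    Continuous F ∧ Integrable F ∧ Integrable (fun u : ℝ => u ^ 2 * ‖F u‖) ∧
    Integrable (fun u : ℝ => (u : ℂ) * F u) ∧
    (∀ x : ℝ, 2 * Real.pi * f x =
      ∫ u : ℝ, F u * (starRingEnd ℂ) (Complex.exp (Complex.I * (u : ℂ) * (x : ℂ)))) ∧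
    (deriv f 0 = 0 → ∫ u : ℝ, (u : ℂ) * F u = 0) := by
  obtain ⟨g, hg⟩ : ∃ g : 𝓢(ℝ, ℂ), (g : ℝ → ℂ) = f :=
    ⟨hf_supp.toSchwartzMap hf_smooth, rfl⟩
  obtain ⟨S, hS⟩ : ∃ S : 𝓢(ℝ, ℂ), S = 𝓕⁻ g := ⟨_, rfl⟩
  have hpi : (2 * Real.pi) ≠ 0 := by positivity
  have hFS : ∀ u : ℝ, F u = S (u / (2 * Real.pi)) := by
    intro u
    rw [hF, hS, SchwartzMap.fourierInv_coe, hg, Real.fourierInv_eq']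
    congr 1; ext x
    rw [smul_eq_mul]
    congr 2
    simp only [RCLike.inner_apply, conj_trivial]
    push_cast
    have : (Real.pi : ℂ) ≠ 0 := by exact_mod_cast Real.pi_ne_zero
    field_simp
  have hFS' : F = fun u => S (u / (2 * Real.pi)) := funext hFS
  have hinv : 𝓕 (S : ℝ → ℂ) = f := by
    rw [← SchwartzMap.fourier_coe, hS, FourierTransform.fourier_fourierInv_eq, hg]
  have hS0 : Integrable S := S.integrable
  have hS1 : Integrable (fun x : ℝ => x • S x) := by
    have := S.integrable_pow_mul volume 1
    refine (integrable_norm_iff ?_).1 ?_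
    · exact (continuous_id.smul S.continuous).aestronglyMeasurable
    · simpa [norm_smul] using this
  have hc : Continuous F := by
    rw [hFS']; exact S.continuous.comp (by fun_prop)
  have hF1 : Integrable (fun u : ℝ => (u : ℂ) * F u) := by
    have := (hS1.comp_div hpi).const_mul ((2 * Real.pi : ℝ) : ℂ)
    refine this.congr (Filter.Eventually.of_forall fun u => ?_)
    simp only [hFS]
    rw [Complex.real_smul]
    push_cast
    have : (Real.pi : ℂ) ≠ 0 := by exact_mod_cast Real.pi_ne_zero
    field_simp
  refine ⟨hc, ?_, ?_, hF1, ?_, ?_⟩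
  · rw [hFS']; exact hS0.comp_div hpi
  · have := ((S.integrable_pow_mul volume 2).comp_div hpi).const_mul ((2 * Real.pi) ^ 2)
    refine this.congr (Filter.Eventually.of_forall fun u => ?_)
    simp only [hFS]
    rw [Real.norm_eq_abs, sq_abs]
    have := Real.pi_ne_zero
    field_simp
  · intro x
    have h1 : ∀ u : ℝ, F u * (starRingEnd ℂ) (Complex.exp (Complex.I * (u : ℂ) * (x : ℂ))) =
        (fun v : ℝ => Complex.exp (↑(-2 * Real.pi * v * x) * Complex.I) • S v)
          (u / (2 * Real.pi)) := by
      intro u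
      simp only [hFS, ← Complex.exp_conj, map_mul, Complex.conj_I, Complex.conj_ofReal,
        smul_eq_mul]
      rw [mul_comm]
      congr 2
      push_cast
      have : (Real.pi : ℂ) ≠ 0 := by exact_mod_cast Real.pi_ne_zero
      field_simp
    rw [integral_congr_ae (Filter.Eventually.of_forall h1)]
    rw [Measure.integral_comp_div
      (fun v : ℝ => Complex.exp (↑(-2 * Real.pi * v * x) * Complex.I) • S v), ← Real.fourier_real_eq_integral_exp_smul, hinv,
      abs_of_pos (by positivity), Complex.real_smul]
    push_cast; rfl
  · intro hd
    have h2 := congrFun (Real.deriv_fourier hS0 hS1) 0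
    rw [hinv, hd, Real.fourier_real_eq_integral_exp_smul] at h2
    have h3 : ∀ u : ℝ, (u : ℂ) * F u = Complex.I *
        (fun v : ℝ => Complex.exp (↑(-2 * Real.pi * v * (0 : ℝ)) * Complex.I) •
          ((-2 * Real.pi * Complex.I * v) • S v)) (u / (2 * Real.pi)) := by
      intro u
      simp only [hFS, smul_eq_mul, mul_zero, Complex.ofReal_zero, zero_mul, Complex.exp_zero]
      push_cast
      have : (Real.pi : ℂ) ≠ 0 := by exact_mod_cast Real.pi_ne_zero
      field_simp
      rw [Complex.I_sq]; ring
    rw [integral_congr_ae (Filter.Eventually.of_forall h3)]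
    rw [integral_const_mul, Measure.integral_comp_div
      (fun v : ℝ => Complex.exp (↑(-2 * Real.pi * v * (0 : ℝ)) * Complex.I) •
          ((-2 * Real.pi * Complex.I * v) • S v)), ← h2]
    simp

theorem aux_bound (u x : ℝ) :
    ‖Complex.exp (Complex.I * (u : ℂ) * (x : ℂ)) - 1 - Complex.I * (u : ℂ) * (x : ℂ)‖
      ≤ 3 * (u ^ 2 * x ^ 2) := by
  have hn : ‖Complex.I * (u : ℂ) * (x : ℂ)‖ = |u * x| := by
    simp [abs_mul]
  have hs : u ^ 2 * x ^ 2 = |u * x| ^ 2 := by rw [sq_abs]; ring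
  rw [hs]
  by_cases h : |u * x| ≤ 1
  · have := Complex.norm_exp_sub_one_sub_id_le (hn ▸ h)
    rw [hn] at this
    nlinarith [sq_nonneg |u * x|]
  · push Not at h
    have he : ‖Complex.exp (Complex.I * (u : ℂ) * (x : ℂ))‖ = 1 := by
      rw [show Complex.I * (u : ℂ) * (x : ℂ) = ((u * x : ℝ) : ℂ) * Complex.I by push_cast; ring]
      exact Complex.norm_exp_ofReal_mul_I _
    calc _ ≤ ‖Complex.exp (Complex.I * (u : ℂ) * (x : ℂ)) - 1‖ + ‖Complex.I * (u : ℂ) * (x : ℂ)‖ :=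
          norm_sub_le _ _
      _ ≤ (1 + 1) + |u * x| := by
          rw [hn]; gcongr
          exact (norm_sub_le _ _).trans (by rw [he]; simp)
      _ ≤ _ := by nlinarith

theorem aux_fubini (m : Measure ℝ) [SFinite m] (f F : ℝ → ℂ) (K : ℝ → ℝ → ℂ)
    (b c : ℝ → ℝ) (hF : Continuous F) (hK : Continuous (Function.uncurry K))
    (hb : Integrable (fun u => b u * ‖F u‖)) (hc : Integrable c m)
    (hbound : ∀ u x, ‖K u x‖ ≤ b u * c x)
    (hinv : ∀ x, 2 * Real.pi * f x = ∫ u : ℝ, F u * (starRingEnd ℂ) (K u x)) :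
    Integrable f m ∧ Integrable (fun u => F u * (starRingEnd ℂ) (∫ x, K u x ∂m)) ∧
    2 * Real.pi * ∫ x, f x ∂m = ∫ u, F u * (starRingEnd ℂ) (∫ x, K u x ∂m) := by
  have hint : Integrable (Function.uncurry fun (u x : ℝ) => F u * (starRingEnd ℂ) (K u x))
      (volume.prod m) := by
    refine (hb.mul_prod hc).mono' ?_ ?_
    · apply Continuous.aestronglyMeasurable
      exact (hF.comp continuous_fst).mul (Complex.continuous_conj.comp hK)
    · refine Filter.Eventually.of_forall fun p => ?_
      simp only [Function.uncurry, norm_mul, RCLike.norm_conj]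
      nlinarith [mul_le_mul_of_nonneg_left (hbound p.1 p.2) (norm_nonneg (F p.1))]
  have hpi : (2 * Real.pi : ℂ) ≠ 0 := by
    have : (Real.pi : ℂ) ≠ 0 := by exact_mod_cast Real.pi_ne_zero
    simpa using this
  have e : ∀ u, F u * (starRingEnd ℂ) (∫ x, K u x ∂m) =
      ∫ x, F u * (starRingEnd ℂ) (K u x) ∂m := by
    intro u
    rw [integral_const_mul, integral_conj]
  refine ⟨?_, ?_, ?_⟩
  · have h := hint.integral_prod_right
    simp only [Function.uncurry, ← hinv] at h
    have := h.const_mul (2 * Real.pi : ℂ)⁻¹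
    refine this.congr (Filter.Eventually.of_forall fun x => ?_)
    simp only
    field_simp
  · simp_rw [e]; exact hint.integral_prod_left
  · simp_rw [e]
    rw [integral_integral_swap hint, ← integral_const_mul]
    simp_rw [hinv]

/-- Decomposition (4.5)–(4.6) in the proof of Proposition 4.1: with
`ψ(u) = ∫ (e^{iux} - 1 - iux) dμ(x)` (absolutely convergent) and a smooth compactly
supported `f : ℝ → ℂ` with `f(0) = 0` and `f'(0) = 0`, for every `t > 0`,
`∫ f dν_t = t ∫ f dμ + (2π)⁻¹ ∫ (𝓕f)(u) · conj(e^{tψ(u)} - 1 - tψ(u)) du`,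
all integrals appearing being absolutely convergent. -/
theorem linearization_decomposition
    (μ : Measure ℝ)
    (hμ_supp : μ (Set.Icc (-1 : ℝ) 1)ᶜ = 0)
    (hμ_mom : Integrable (fun x : ℝ => x ^ 2) μ)
    (ν : ℝ → Measure ℝ)
    (hν_prob : ∀ t : ℝ, 0 < t → IsProbabilityMeasure (ν t))
    (hν_char : ∀ t : ℝ, 0 < t → ∀ u : ℝ,
      ∫ x : ℝ, Complex.exp (Complex.I * (u : ℂ) * (x : ℂ)) ∂(ν t) =
        Complex.exp ((t : ℂ) *
          ∫ x : ℝ, (Complex.exp (Complex.I * (u : ℂ) * (x : ℂ)) - 1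
            - Complex.I * (u : ℂ) * (x : ℂ)) ∂μ))
    (f : ℝ → ℂ) (hf_smooth : ContDiff ℝ (⊤ : ℕ∞) f) (hf_supp : HasCompactSupport f)
    (hf0 : f 0 = 0) (hf'0 : deriv f 0 = 0)
    (t : ℝ) (ht : 0 < t) :
    (∀ u : ℝ, Integrable (fun x : ℝ =>
        Complex.exp (Complex.I * (u : ℂ) * (x : ℂ)) - 1
          - Complex.I * (u : ℂ) * (x : ℂ)) μ) ∧
    Integrable f (ν t) ∧
    Integrable f μ ∧
    (∀ u : ℝ, Integrable (fun x : ℝ =>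
        Complex.exp (Complex.I * (u : ℂ) * (x : ℂ)) * f x) volume) ∧
    Integrable (fun u : ℝ =>
        (∫ x : ℝ, Complex.exp (Complex.I * (u : ℂ) * (x : ℂ)) * f x) *
          (starRingEnd ℂ)
            (Complex.exp ((t : ℂ) *
                ∫ x : ℝ, (Complex.exp (Complex.I * (u : ℂ) * (x : ℂ)) - 1
                  - Complex.I * (u : ℂ) * (x : ℂ)) ∂μ) - 1 -
              (t : ℂ) *
                ∫ x : ℝ, (Complex.exp (Complex.I * (u : ℂ) * (x : ℂ)) - 1
                  - Complex.I * (u : ℂ) * (x : ℂ)) ∂μ)) volume ∧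
    ∫ x : ℝ, f x ∂(ν t) =
      (t : ℂ) * ∫ x : ℝ, f x ∂μ +
        (2 * Real.pi : ℂ)⁻¹ *
          ∫ u : ℝ,
            (∫ x : ℝ, Complex.exp (Complex.I * (u : ℂ) * (x : ℂ)) * f x) *
              (starRingEnd ℂ)
                (Complex.exp ((t : ℂ) *
                    ∫ x : ℝ, (Complex.exp (Complex.I * (u : ℂ) * (x : ℂ)) - 1
                      - Complex.I * (u : ℂ) * (x : ℂ)) ∂μ) - 1 -
                  (t : ℂ) *
                    ∫ x : ℝ, (Complex.exp (Complex.I * (u : ℂ) * (x : ℂ)) - 1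
                      - Complex.I * (u : ℂ) * (x : ℂ)) ∂μ) := by
  have hνp := hν_prob t ht
  have hint1 : ∀ u : ℝ, Integrable (fun x : ℝ =>
        Complex.exp (Complex.I * (u : ℂ) * (x : ℂ)) - 1
          - Complex.I * (u : ℂ) * (x : ℂ)) μ := fun u =>
    ((hμ_mom.const_mul (u ^ 2)).const_mul 3).mono'
      (Continuous.aestronglyMeasurable (by fun_prop))
      (Filter.Eventually.of_forall fun x => aux_bound u x)
  have hint4 : ∀ u : ℝ, Integrable (fun x : ℝ =>
        Complex.exp (Complex.I * (u : ℂ) * (x : ℂ)) * f x) volume := fun u =>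
    (Continuous.mul (by fun_prop) hf_smooth.continuous).integrable_of_hasCompactSupport
      hf_supp.mul_left
  obtain ⟨F, hF⟩ : ∃ F : ℝ → ℂ, F = fun u : ℝ =>
    ∫ x : ℝ, Complex.exp (Complex.I * (u : ℂ) * (x : ℂ)) * f x := ⟨_, rfl⟩
  have hFu : ∀ u : ℝ, (∫ x : ℝ, Complex.exp (Complex.I * (u : ℂ) * (x : ℂ)) * f x) = F u :=
    fun u => by rw [hF]
  obtain ⟨hFc, hF0, hF2, hF1, hFinv, hFd⟩ :=
    aux_fourier f hf_smooth hf_supp F (fun u => (hFu u).symm)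
  have hFd := hFd hf'0
  have hFz : ∫ u, F u = 0 := by
    have := hFinv 0
    simpa [hf0] using this.symm
  -- the law
  obtain ⟨hfν, hν2, hν3⟩ := aux_fubini (ν t) f F
    (fun u x => Complex.exp (Complex.I * (u : ℂ) * (x : ℂ))) (fun _ => 1) (fun _ => 1) hFc
    (by simp only [Function.uncurry_def]; fun_prop) (by simpa using hF0.norm) (integrable_const _)
    (by
      intro u x
      rw [show Complex.I * (u : ℂ) * (x : ℂ) = ((u * x : ℝ) : ℂ) * Complex.I by push_cast; ring,
        Complex.norm_exp_ofReal_mul_I]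
      simp) hFinv
  -- the jump measure, away from the origin
  have hsig : SigmaFinite (μ.restrict {0}ᶜ) := by
    have h1 : FinStronglyMeasurable (fun x : ℝ => x ^ 2) μ :=
      (memLp_one_iff_integrable.2 hμ_mom).finStronglyMeasurable_of_stronglyMeasurable
        (Continuous.stronglyMeasurable (by fun_prop)) one_ne_zero ENNReal.one_ne_top
    obtain ⟨s, hs, hs0, hsf⟩ := h1.exists_set_sigmaFinite
    refine Measure.sigmaFinite_of_le (μ.restrict s) (Measure.restrict_mono ?_ le_rfl)
    intro x hx
    by_contra hxs
    exact hx (by simpa using hs0 x hxs)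
  obtain ⟨hfμ, hμ2, hμ3⟩ := aux_fubini (μ.restrict {0}ᶜ) f F
    (fun u x => Complex.exp (Complex.I * (u : ℂ) * (x : ℂ)) - 1
          - Complex.I * (u : ℂ) * (x : ℂ)) (fun u => 3 * u ^ 2) (fun x => x ^ 2) hFc
    (by simp only [Function.uncurry_def]; fun_prop)
    (by simpa [mul_assoc] using hF2.const_mul 3) hμ_mom.restrict
    (by intro u x; exact (aux_bound u x).trans (mul_assoc _ _ _).ge)
    (by
      intro x
      have e : ∀ u : ℝ, F u * (starRingEnd ℂ) (Complex.exp (Complex.I * (u : ℂ) * (x : ℂ)) - 1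
          - Complex.I * (u : ℂ) * (x : ℂ)) =
          F u * (starRingEnd ℂ) (Complex.exp (Complex.I * (u : ℂ) * (x : ℂ))) - F u +
            Complex.I * x * (u * F u) := by
        intro u
        simp only [map_sub, map_mul, map_one, Complex.conj_I, Complex.conj_ofReal]
        ring
      have i1 : Integrable (fun u : ℝ =>
          F u * (starRingEnd ℂ) (Complex.exp (Complex.I * (u : ℂ) * (x : ℂ)))) := by
        refine hF0.norm.mono' (Continuous.aestronglyMeasurable ?_)
          (Filter.Eventually.of_forall fun u => ?_)
        · exact hFc.mul (Complex.continuous_conj.comp (by fun_prop))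
        · rw [norm_mul, RCLike.norm_conj,
            show Complex.I * (u : ℂ) * (x : ℂ) = ((u * x : ℝ) : ℂ) * Complex.I by
              push_cast; ring, Complex.norm_exp_ofReal_mul_I, mul_one]
      simp_rw [e]
      have i2 : Integrable (fun u : ℝ =>
          F u * (starRingEnd ℂ) (Complex.exp (Complex.I * (u : ℂ) * (x : ℂ))) - F u) := i1.sub hF0
      rw [integral_add i2 (hF1.const_mul _), integral_sub i1 hF0, integral_const_mul,
        hFd, hFz, hFinv x]
      ring)
  have hrest : ∀ g : ℝ → ℂ, g 0 = 0 → ∫ x, g x ∂(μ.restrict {0}ᶜ) = ∫ x, g x ∂μ := by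
    intro g hg
    apply setIntegral_eq_integral_of_forall_compl_eq_zero
    intro x hx
    have : x = 0 := by simpa using hx
    rw [this, hg]
  have hfμ' : Integrable f μ := by
    refine (integrableOn_iff_integrable_of_support_subset ?_).1 hfμ
    intro x hx h0
    apply hx
    have : x = 0 := by simpa using h0
    rw [this, hf0]
  rw [hrest f hf0] at hμ3
  have hψ := fun u : ℝ => hrest (fun x : ℝ => Complex.exp (Complex.I * (u : ℂ) * (x : ℂ)) - 1
          - Complex.I * (u : ℂ) * (x : ℂ)) (by simp)
  simp only [hψ] at hμ2 hμ3
  simp only [hν_char t ht] at hν2 hν3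
  simp only [hFu]
  have key : ∀ a b : ℂ, ∀ u : ℝ, F u * (starRingEnd ℂ) (a - 1 - (t : ℂ) * b) =
      F u * (starRingEnd ℂ) a - F u - (t : ℂ) * (F u * (starRingEnd ℂ) b) := by
    intro a b u
    simp only [map_sub, map_mul, map_one, Complex.conj_ofReal]
    ring
  simp only [key]
  have i2 := hν2.sub hF0
  simp only [Pi.sub_def] at i2
  refine ⟨hint1, hfν, hfμ', hint4, i2.sub (hμ2.const_mul _), ?_⟩
  rw [integral_sub i2 (hμ2.const_mul _), integral_sub hν2 hF0, integral_const_mul,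
    hFz, ← hν3, ← hμ3]
  have : (Real.pi : ℂ) ≠ 0 := by exact_mod_cast Real.pi_ne_zero
  field_simp
  ring
end
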